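/- The complete graph K₈ on eight vertices is biplanar: its edge set can be partitioned into two sets E₁ and E₂ such that both spanning subgraphs (V(K₈), E₁) and (V(K₈), E₂) are planar. -/

import Mathlib

/-!
Some graph on eight vertices is planar and self-complementary, and this proves the claim: take `E₁`
to be its edge set and `E₂` the edge set of its complement.

The graph `selfComplGraph` has 14 of the 28 edges of `K₈`. The permutation `(0 1 2 3)(4 5 6 7)`
exchanges its edges and its non-edges (`compl_selfComplGraph`), so a drawing of the graph
also draws the complement after relabelling the vertices (`SimpleGraph.IsPlanar.comap`). It is
planar because it has a straight-line drawing with vertices at integer points. The criterion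
`isPlanar_of_straightLine` reduces the correctness of such a drawing to signs of integer
determinants: no three vertices are collinear, and of any two edges without common endpoint, one lies
strictly on one side of the line through the other.
-/

open Set

/-- A planar drawing (embedding) of a simple graph in the Euclidean plane:
vertices are mapped to distinct points, each edge is drawn as a simple
(injective continuous) curve between the images of its endpoints, curves do
not pass through images of vertices other than their endpoints, and two
curves of distinct edges may meet only at common endpoints. -/
structure SimpleGraph.PlaneEmbedding {V : Type*} (G : SimpleGraph V) : Type _ where
  vmap : V → ℝ × ℝ
  emap : Sym2 V → ℝ → ℝ × ℝ
  vmap_inj : Function.Injective vmap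
  emap_cont : ∀ e ∈ G.edgeSet, ContinuousOn (emap e) (Icc 0 1)
  emap_inj : ∀ e ∈ G.edgeSet, InjOn (emap e) (Icc 0 1)
  emap_ends : ∀ e ∈ G.edgeSet, Sym2.map vmap e = s(emap e 0, emap e 1)
  emap_avoids : ∀ e ∈ G.edgeSet, ∀ t ∈ Ioo (0:ℝ) 1, emap e t ∉ range vmap
  no_cross : ∀ e ∈ G.edgeSet, ∀ e' ∈ G.edgeSet, e ≠ e' →
    ∀ t ∈ Ioo (0:ℝ) 1, ∀ u ∈ Icc (0:ℝ) 1, emap e t ≠ emap e' u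

/-- A simple graph is planar if it admits a planar drawing in the plane. -/
def SimpleGraph.IsPlanar {V : Type*} (G : SimpleGraph V) : Prop :=
  Nonempty G.PlaneEmbedding

/-- The determinant of `b - a` and `c - a`, i.e. twice the signed area of the triangle `abc`. It
vanishes exactly when the three points are collinear. -/
def orient {R : Type*} [CommRing R] (a b c : R × R) : R :=
  (b.1 - a.1) * (c.2 - a.2) - (b.2 - a.2) * (c.1 - a.1)

/-- The affine parametrisation of the segment from `a` (at time `0`) to `b` (at time `1`). -/
def seg (a b : ℝ × ℝ) (t : ℝ) : ℝ × ℝ :=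
  ((1 - t) * a.1 + t * b.1, (1 - t) * a.2 + t * b.2)

lemma seg_zero (a b : ℝ × ℝ) : seg a b 0 = a := by simp [seg]

lemma seg_one (a b : ℝ × ℝ) : seg a b 1 = b := by simp [seg]

lemma seg_symm (a b : ℝ × ℝ) (t : ℝ) : seg a b t = seg b a (1 - t) := by
  ext <;> simp only [seg] <;> ring

lemma seg_injective {a b : ℝ × ℝ} (hab : a ≠ b) : Function.Injective (seg a b) := by
  intro t u h
  simp only [seg, Prod.mk.injEq] at h
  by_contra htu
  have htu' : t - u ≠ 0 := sub_ne_zero.2 htu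
  refine hab (Prod.ext ?_ ?_)
  · apply mul_left_cancel₀ htu'
    linear_combination -h.1
  · apply mul_left_cancel₀ htu'
    linear_combination -h.2

lemma orient_seg (a b c d : ℝ × ℝ) (u : ℝ) :
    orient a b (seg c d u) = (1 - u) * orient a b c + u * orient a b d := by
  simp only [orient, seg]; ring

lemma orient_seg_self (a b : ℝ × ℝ) (t : ℝ) : orient a b (seg a b t) = 0 := by
  simp only [orient, seg]; ring

/-- Two segments leaving `a` in non-parallel directions meet only at `a`. -/
lemma seg_ne_of_common_left {a b d : ℝ × ℝ} (h : orient a b d ≠ 0) {t : ℝ} (ht : t ≠ 0) (u : ℝ) :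
    seg a b t ≠ seg a d u := by
  intro he
  have hab : a ≠ b := by rintro rfl; simp [orient] at h
  have h0 : u * orient a b d = 0 := by
    have := orient_seg a b a d u
    rw [← he, orient_seg_self] at this
    have haa : orient a b a = 0 := by simp [orient]
    rw [haa] at this
    linarith
  have hu : u = 0 := (mul_eq_zero.1 h0).resolve_right h
  rw [hu, seg_zero] at he
  exact ht (seg_injective hab (he.trans (seg_zero a b).symm))

/-- A segment `cd` strictly on one side of the line `ab` does not meet that line. -/
lemma seg_ne_of_sameSide {a b c d : ℝ × ℝ} (h : 0 < orient a b c * orient a b d) (t : ℝ)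
    {u : ℝ} (hu : u ∈ Icc (0 : ℝ) 1) : seg a b t ≠ seg c d u := by
  intro he
  have h1 := orient_seg a b c d u
  rw [← he, orient_seg_self] at h1
  obtain ⟨h0, hle⟩ := hu
  -- a vanishing convex combination of two numbers of the same sign is impossible
  rcases pos_and_pos_or_neg_and_neg_of_mul_pos h with ⟨hc, hd⟩ | ⟨hc, hd⟩
  · rcases h0.eq_or_lt with rfl | h0
    · linarith
    · nlinarith [mul_pos h0 hd, mul_nonneg (sub_nonneg.2 hle) hc.le]
  · rcases h0.eq_or_lt with rfl | h0
    · linarith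
    · nlinarith [mul_neg_of_pos_of_neg h0 hd,
        mul_nonpos_of_nonneg_of_nonpos (sub_nonneg.2 hle) hc.le]

lemma exists_lt_of_mem_edgeSet {V : Type*} [LinearOrder V] {G : SimpleGraph V} {e : Sym2 V}
    (he : e ∈ G.edgeSet) : ∃ a b, a < b ∧ G.Adj a b ∧ e = s(a, b) := by
  induction e using Sym2.ind with
  | _ a b =>
    have hadj : G.Adj a b := he
    rcases lt_or_gt_of_ne hadj.ne with h | h
    · exact ⟨a, b, h, hadj, rfl⟩
    · exact ⟨b, a, h, hadj.symm, Sym2.eq_swap⟩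

/-- The embedding of the integer grid into the plane. -/
def gridPoint (a : ℤ × ℤ) : ℝ × ℝ := (a.1, a.2)

lemma orient_gridPoint (a b c : ℤ × ℤ) :
    orient (gridPoint a) (gridPoint b) (gridPoint c) = (orient a b c : ℤ) := by
  simp [orient, gridPoint]

/-- Joining adjacent vertices by straight segments is a planar drawing as soon as the vertices are at
integer points in general position and, of any two edges without common endpoint, one lies
strictly on one side of the line through the other. The order on `V` serves only to choose a
direction in which to traverse each edge. -/
theorem isPlanar_of_straightLine {V : Type*} [LinearOrder V] (G : SimpleGraph V) (p : V → ℤ × ℤ)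
    (hp : Function.Injective p)
    (hgen : ∀ a b c, a ≠ b → a ≠ c → b ≠ c → orient (p a) (p b) (p c) ≠ 0)
    (hcross : ∀ a b, G.Adj a b → a < b → ∀ c d, G.Adj c d → c < d →
      a ≠ c → a ≠ d → b ≠ c → b ≠ d →
      0 < orient (p a) (p b) (p c) * orient (p a) (p b) (p d) ∨
      0 < orient (p c) (p d) (p a) * orient (p c) (p d) (p b)) :
    G.IsPlanar := by
  set q : V → ℝ × ℝ := fun v => gridPoint (p v) with hq
  have hqinj : Function.Injective q := by
    intro a b h
    simp only [hq, gridPoint, Prod.mk.injEq, Int.cast_inj] at h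
    exact hp (Prod.ext h.1 h.2)
  have hqgen : ∀ a b c, a ≠ b → a ≠ c → b ≠ c → orient (q a) (q b) (q c) ≠ 0 := by
    intro a b c hab hac hbc
    simp only [hq, orient_gridPoint]
    exact_mod_cast hgen a b c hab hac hbc
  have hdraw : ∀ a b, a < b → seg (q s(a, b).inf) (q s(a, b).sup) = seg (q a) (q b) := by
    intro a b h
    simp [inf_eq_left.2 h.le, sup_eq_right.2 h.le]
  refine ⟨⟨q, fun e => seg (q e.inf) (q e.sup), hqinj, ?_, ?_, ?_, ?_, ?_⟩⟩
  · intro e _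
    unfold seg
    fun_prop
  · intro e he
    obtain ⟨a, b, hab, -, rfl⟩ := exists_lt_of_mem_edgeSet he
    simp only [hdraw a b hab]
    exact (seg_injective (hqinj.ne hab.ne)).injOn
  · intro e he
    obtain ⟨a, b, hab, -, rfl⟩ := exists_lt_of_mem_edgeSet he
    rw [hdraw a b hab, seg_zero, seg_one, Sym2.map_mk]
  · rintro e he t ⟨ht0, ht1⟩ ⟨w, hw⟩
    obtain ⟨a, b, hab, -, rfl⟩ := exists_lt_of_mem_edgeSet he
    simp only [hdraw a b hab] at hw
    have hinj := seg_injective (hqinj.ne hab.ne)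
    rcases eq_or_ne a w with rfl | haw
    · exact ht0.ne (hinj ((seg_zero _ _).trans hw))
    rcases eq_or_ne b w with rfl | hbw
    · exact ht1.ne' (hinj ((seg_one _ _).trans hw))
    apply hqgen a b w hab.ne haw hbw
    rw [hw, orient_seg_self]
  · rintro e he e' he' hne t ⟨ht0, ht1⟩ u hu
    obtain ⟨a, b, hab, hadj, rfl⟩ := exists_lt_of_mem_edgeSet he
    obtain ⟨c, d, hcd, hadj', rfl⟩ := exists_lt_of_mem_edgeSet he'
    simp only [hdraw a b hab, hdraw c d hcd]
    have hts : 1 - t ≠ 0 := sub_ne_zero.2 ht1.ne.symm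
    -- edges with a common endpoint are parametrised so that both start there
    rcases eq_or_ne a c with rfl | hac
    · have hbd : b ≠ d := by rintro rfl; exact hne rfl
      exact seg_ne_of_common_left (hqgen a b d hab.ne hcd.ne hbd) ht0.ne' u
    rcases eq_or_ne b d with rfl | hbd
    · rw [seg_symm, seg_symm (q c)]
      exact seg_ne_of_common_left (hqgen b a c hab.ne' hcd.ne' hac) hts _
    rcases eq_or_ne a d with rfl | had
    · rw [seg_symm (q c)]
      exact seg_ne_of_common_left
        (hqgen a b c hab.ne hcd.ne' (hcd.trans hab).ne') ht0.ne' _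
    rcases eq_or_ne b c with rfl | hbc
    · rw [seg_symm (q a)]
      exact seg_ne_of_common_left (hqgen b a d hab.ne' hcd.ne had) hts _
    rcases hcross a b hadj hab c d hadj' hcd hac had hbc hbd with h | h
    · refine seg_ne_of_sameSide ?_ t hu
      simp only [hq, orient_gridPoint]
      exact_mod_cast h
    · refine (seg_ne_of_sameSide ?_ u ⟨ht0.le, ht1.le⟩).symm
      simp only [hq, orient_gridPoint]
      exact_mod_cast h

/-- A planar drawing of `G` is, after relabelling along an injection `f`, one of `G.comap f`. -/
theorem SimpleGraph.IsPlanar.comap {V W : Type*} {G : SimpleGraph W} (hG : G.IsPlanar) {f : V → W}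
    (hf : Function.Injective f) : (G.comap f).IsPlanar := by
  obtain ⟨D⟩ := hG
  have hmem : ∀ e ∈ (G.comap f).edgeSet, e.map f ∈ G.edgeSet := by
    intro e he
    induction e using Sym2.ind with
    | _ a b => exact he
  refine ⟨⟨D.vmap ∘ f, fun e => D.emap (e.map f), D.vmap_inj.comp hf,
    fun e he => D.emap_cont _ (hmem e he), fun e he => D.emap_inj _ (hmem e he), ?_, ?_, ?_⟩⟩
  · intro e he
    rw [← D.emap_ends _ (hmem e he), Sym2.map_map]
  · intro e he t ht hr
    exact D.emap_avoids _ (hmem e he) t ht (range_comp_subset_range f D.vmap hr)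
  · intro e he e' he' hne
    exact D.no_cross _ (hmem e he) _ (hmem e' he') ((Sym2.map.injective hf).ne hne)

/-- A planar self-complementary graph on eight vertices. Each edge is listed once, with its smaller
endpoint first. -/
def selfComplGraph : SimpleGraph (Fin 8) where
  Adj a b := (min a b, max a b) ∈
    ([(0, 1), (0, 4), (0, 6), (1, 3), (1, 4), (1, 6), (2, 3), (2, 4), (2, 6), (3, 4), (3, 6),
      (4, 7), (5, 6), (5, 7)] : List (Fin 8 × Fin 8))
  symm := ⟨fun a b h => by rwa [min_comm, max_comm]⟩
  loopless := ⟨by decide⟩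

instance : DecidableRel selfComplGraph.Adj := fun a b =>
  inferInstanceAs (Decidable ((min a b, max a b) ∈ (_ : List (Fin 8 × Fin 8))))

/-- The positions of the vertices in a straight-line drawing of `selfComplGraph`. -/
def position : Fin 8 → ℤ × ℤ :=
  ![(4, 3), (1, 1), (0, 2), (2, 3), (4, 5), (2, 1), (0, 0), (5, 2)]

/-- The permutation `(0 1 2 3)(4 5 6 7)`, which exchanges the edges and non-edges of
`selfComplGraph`. -/
def complPerm : Fin 8 → Fin 8 := ![1, 2, 3, 0, 5, 6, 7, 4]

lemma selfComplGraph_isPlanar : selfComplGraph.IsPlanar :=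
  isPlanar_of_straightLine selfComplGraph position (by decide +kernel) (by decide +kernel)
    (by decide +kernel)

lemma compl_selfComplGraph : selfComplGraphᶜ = selfComplGraph.comap complPerm := by
  have h : ∀ a b, selfComplGraphᶜ.Adj a b ↔ selfComplGraph.Adj (complPerm a) (complPerm b) := by
    decide +kernel
  ext a b
  exact h a b

/-- The complete graph `K₈` is biplanar: its edge set can be partitioned into
two sets each of which forms a planar graph on the eight vertices. -/
theorem K8_biplanar :
    ∃ E₁ E₂ : Set (Sym2 (Fin 8)),
      E₁ ∪ E₂ = (⊤ : SimpleGraph (Fin 8)).edgeSet ∧ E₁ ∩ E₂ = ∅ ∧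
      (SimpleGraph.fromEdgeSet E₁).IsPlanar ∧
      (SimpleGraph.fromEdgeSet E₂).IsPlanar := by
  refine ⟨selfComplGraph.edgeSet, selfComplGraphᶜ.edgeSet, ?_, ?_, ?_, ?_⟩
  · rw [← SimpleGraph.edgeSet_sup, sup_compl_eq_top]
  · rw [← SimpleGraph.edgeSet_inf, inf_compl_eq_bot, SimpleGraph.edgeSet_bot]
  · rw [SimpleGraph.fromEdgeSet_edgeSet]
    exact selfComplGraph_isPlanar
  · rw [SimpleGraph.fromEdgeSet_edgeSet, compl_selfComplGraph]
    exact selfComplGraph_isPlanar.comap (by decide +kernel)
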